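/- arXiv:2411.14689 — 2 statements merged into one kernel-verified Lean document; each statement's English description precedes it below -/
import Mathlib

section
/- Let q be a free idempotent ultrafilter on ℕ, let γ > 0 be irrational, and let f, g : ℝ → ℝ both be γ-periodic (f(x + γ) = f(x) and g(x + γ) = g(x) for all x). Let x ∈ ℝ, suppose the difference quotients h ↦ (f(x + h) − f(x))/h and h ↦ (g(x + h) − g(x))/h both tend to +∞ as h → 0 with h ≠ 0, and suppose there exists δ > 0 such that (f(x + h) − f(x))/h > (g(x + h) − g(x))/h whenever 0 < |h| < δ. Then the set {n : ℕ | (f(x + n) − f(x))/rm_γ(n) > (g(x + n) − g(x))/rm_γ(n)} belongs to q. (I.e., Δf(x)/[rm_γ] > Δg(x)/[rm_γ] as hyperreals.) -/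
noncomputable def rm (γ : ℝ) (n : ℕ) : ℝ := (n : ℝ) - γ * (round ((n : ℝ) / γ) : ℝ)

/-!
In a compact Hausdorff group every homomorphism tends to `0` along an idempotent ultrafilter: its
limit `a` exists by compactness and satisfies `a + a = a`. For the map `ℕ → ℝ / γℤ` this says that
`rm γ` tends to `0` along `q`, and irrationality of `γ` keeps it away from the value `0`. Hence
every property holding on a punctured neighbourhood of `0` holds at `rm γ n` for `q`-almost all `n`,
while `γ`-periodicity replaces the step `n` by the step `rm γ n`.
-/

open Filter Topology

section IdempotentUltrafilter

attribute [local instance] Ultrafilter.add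

variable {M G F : Type*} [FunLike F M G] [TopologicalSpace G]

theorem tendsto_ultrafilter_add [Add M] [Add G] [SeparatelyContinuousAdd G] [AddHomClass F M G]
    (φ : F) {p q : Ultrafilter M} {a b : G} (ha : Tendsto φ p (𝓝 a)) (hb : Tendsto φ q (𝓝 b)) :
    Tendsto φ (p + q : Ultrafilter M) (𝓝 (a + b)) := by
  refine (nhds_basis_opens (a + b)).tendsto_right_iff.2 fun U ⟨habU, hU⟩ ↦ ?_
  rw [Ultrafilter.eventually_add]
  filter_upwards [(ha.add_const b).eventually (hU.mem_nhds habU)] with m hm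
  filter_upwards [(hb.const_add (φ m)).eventually (hU.mem_nhds hm)] with n hn
  rwa [map_add]

theorem tendsto_zero_of_idempotent_ultrafilter [Add M] [AddGroup G] [SeparatelyContinuousAdd G]
    [CompactSpace G] [T2Space G] [AddHomClass F M G] (φ : F) {q : Ultrafilter M} (hq : q + q = q) :
    Tendsto φ q (𝓝 0) := by
  obtain ⟨a, -, ha⟩ := isCompact_univ.ultrafilter_le_nhds (q.map φ) (by simp)
  have ha : Tendsto φ q (𝓝 a) := ha
  have haa : Tendsto φ q (𝓝 (a + a)) := by simpa only [hq] using tendsto_ultrafilter_add φ ha ha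
  rwa [add_eq_left.1 (tendsto_nhds_unique haa ha)] at ha

theorem ultrafilter_add_self_eq_iff [AddCommMagma M] {q : Ultrafilter M} :
    q + q = q ↔ ∀ S : Set M, S ∈ q ↔ {n | {m | m + n ∈ S} ∈ q} ∈ q := by
  rw [Ultrafilter.ext_iff]
  refine forall_congr' fun S ↦ ?_
  have mem_add_self : S ∈ q + q ↔ {n | {m | n + m ∈ S} ∈ q} ∈ q :=
    Ultrafilter.eventually_add q q (· ∈ S)
  simp only [mem_add_self, add_comm]
  exact iff_comm

variable {γ : ℝ} {n : ℕ}

theorem norm_natCast_addCircle_eq_abs_rm : ‖((n : ℝ) : AddCircle γ)‖ = |rm γ n| := by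
  rw [AddCircle.norm_eq, rm, div_eq_inv_mul, mul_comm γ]

theorem rm_ne_zero (hγ : Irrational γ) (hn : n ≠ 0) : rm γ n ≠ 0 := by
  intro h
  have hn_eq : (n : ℝ) = γ * round ((n : ℝ) / γ) := sub_eq_zero.1 h
  have hround : round ((n : ℝ) / γ) ≠ 0 := by
    intro h0
    rw [h0, Int.cast_zero, mul_zero] at hn_eq
    exact hn (Nat.cast_eq_zero.1 hn_eq)
  exact (hγ.mul_intCast hround).ne_nat n hn_eq.symm

theorem apply_add_rm_of_periodic {α : Type*} {f : ℝ → α} (hf : Function.Periodic f γ) (x : ℝ) :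
    f (x + rm γ n) = f (x + n) := by
  rw [rm, ← add_sub_assoc, mul_comm γ, hf.sub_int_mul_eq]

theorem tendsto_rm_nhds_zero (hγ : γ ≠ 0) {q : Ultrafilter ℕ} (hq : q + q = q) :
    Tendsto (rm γ) q (𝓝 0) := by
  have : CompactSpace (AddCircle γ) :=
    (AddCircle.homeomorphAddCircle 1 γ one_ne_zero hγ).compactSpace
  let φ : ℕ →+ AddCircle γ := (QuotientAddGroup.mk' _).comp (Nat.castAddMonoidHom ℝ)
  have hφ : Tendsto (fun n ↦ ‖φ n‖) q (𝓝 0) :=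
    tendsto_zero_iff_norm_tendsto_zero.1 (tendsto_zero_of_idempotent_ultrafilter φ hq)
  exact (tendsto_zero_iff_abs_tendsto_zero _).2
    (hφ.congr fun _ ↦ norm_natCast_addCircle_eq_abs_rm)

theorem tendsto_rm_nhdsNE_zero (hγ : Irrational γ) {q : Ultrafilter ℕ} (hq : q + q = q)
    (hq0 : ∀ᶠ n in q, n ≠ 0) : Tendsto (rm γ) q (𝓝[≠] 0) :=
  tendsto_nhdsWithin_iff.2
    ⟨tendsto_rm_nhds_zero hγ.ne_zero hq, hq0.mono fun _ ↦ rm_ne_zero hγ⟩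

theorem eventually_nhdsNE_zero_iff {p : ℝ → Prop} :
    (∀ᶠ h in 𝓝[≠] 0, p h) ↔ ∃ δ, 0 < δ ∧ ∀ h, 0 < |h| → |h| < δ → p h := by
  simp only [eventually_nhdsWithin_iff, Metric.eventually_nhds_iff, Real.dist_0_eq_abs, abs_pos,
    Set.mem_compl_singleton_iff, gt_iff_lt]
  exact exists_congr fun _ ↦ and_congr_right fun _ ↦ forall_congr' fun _ ↦ imp.swap

theorem stmt_12_general {q : Ultrafilter ℕ} (hq : q + q = q) (hq0 : ∀ᶠ n in q, n ≠ 0)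
    (hγ : Irrational γ) {f g : ℝ → ℝ} (hf : Function.Periodic f γ) (hg : Function.Periodic g γ)
    {x : ℝ} (hfg : ∀ᶠ h in 𝓝[≠] 0, (f (x + h) - f x) / h > (g (x + h) - g x) / h) :
    ∀ᶠ n : ℕ in q, (f (x + n) - f x) / rm γ n > (g (x + n) - g x) / rm γ n := by
  filter_upwards [(tendsto_rm_nhdsNE_zero hγ hq hq0).eventually hfg] with n hn
  rwa [apply_add_rm_of_periodic hf, apply_add_rm_of_periodic hg] at hn

end IdempotentUltrafilter

theorem stmt_12 (q : Ultrafilter ℕ)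
    (hfree : ∀ S : Set ℕ, S.Finite → S ∉ q)
    (hidem : ∀ S : Set ℕ, S ∈ q ↔ {n : ℕ | {m : ℕ | m + n ∈ S} ∈ q} ∈ q)
    (γ : ℝ) (hγpos : 0 < γ) (hγirr : Irrational γ)
    (f g : ℝ → ℝ)
    (hperf : ∀ x : ℝ, f (x + γ) = f x)
    (hperg : ∀ x : ℝ, g (x + γ) = g x)
    (x : ℝ)
    (hdivf : Filter.Tendsto (fun h : ℝ => (f (x + h) - f x) / h)
      (nhdsWithin 0 {0}ᶜ) Filter.atTop)
    (hdivg : Filter.Tendsto (fun h : ℝ => (g (x + h) - g x) / h)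
      (nhdsWithin 0 {0}ᶜ) Filter.atTop)
    (hfaster : ∃ δ : ℝ, 0 < δ ∧ ∀ h : ℝ, 0 < |h| → |h| < δ →
      (f (x + h) - f x) / h > (g (x + h) - g x) / h) :
    {n : ℕ | (f (x + n) - f x) / rm γ n > (g (x + n) - g x) / rm γ n} ∈ q := by
  have hq0 : ∀ᶠ n in q, n ≠ 0 := q.compl_mem_iff_notMem.2 (hfree {0} (Set.finite_singleton 0))
  exact stmt_12_general (ultrafilter_add_self_eq_iff.2 hidem) hq0 hγirr hperf hperg
    (eventually_nhdsNE_zero_iff.2 hfaster)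
end

section
/- (Ω as universal Hindman number) Let q be a free idempotent ultrafilter on ℕ. If f : ℕ → ℝ has finite range, then there exist c ∈ ℝ and an infinite set S ⊆ ℕ such that: (a) for every finite nonempty X ⊆ S, f(∑_{x ∈ X} x) = c, and (b) for every finite X ⊆ S (possibly empty), {n : ℕ | f((∑_{x ∈ X} x) + n) = c} ∈ q. (Condition (b) says *f(∑(X ∪ {Ω})) = c where Ω is the canonical infinite hyperreal of the ultrapower by q.) -/
/-!
Let `A ∈ q` be a level set of `f`. Idempotence makes `starSet q A`, the set of `n ∈ A` such that
`n + m ∈ A` for `q`-almost all `m`, again a member of `q`, and it is stable in the sense that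
`n ∈ starSet q A` implies `n + m ∈ starSet q A` for `q`-almost all `m`. So if a finite set `S` has
all its sums in `starSet q A`, then adjoining `q`-almost any `x` preserves this, and as `q` is free
such an `x` exists outside `S`. Hence a set maximal among those with all sums in `starSet q A`,
which the Teichmüller–Tukey lemma provides, is infinite.
-/

open Filter Order

lemma exists_infinite_mem_of_isOfFiniteCharacter {α : Type*} {F : Set (Set α)}
    (hF : IsOfFiniteCharacter F) (hne : F.Nonempty)
    (hext : ∀ S ∈ F, S.Finite → ∃ x ∉ S, insert x S ∈ F) : ∃ S ∈ F, S.Infinite := by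
  obtain ⟨T, hT⟩ := hne
  obtain ⟨S, -, hS⟩ := hF.exists_maximal hT
  refine ⟨S, hS.prop, fun hfin ↦ ?_⟩
  obtain ⟨x, hxS, hx⟩ := hext S hS.prop hfin
  exact hxS (hS.le_of_ge hx (Set.subset_insert x S) (Set.mem_insert x S))

section FiniteSums

variable {M : Type*} [AddCommMonoid M] {B S : Set M}

/-- The sums of finitely many, but at least one, distinct elements of `S`. Unlike `Hindman.FS`,
which takes sums along a stream, this is indexed by a set, so no element is ever repeated. -/
def finiteSums (S : Set M) : Set M :=
  {s | ∃ X : Finset M, X.Nonempty ∧ ↑X ⊆ S ∧ ∑ x ∈ X, x = s}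

lemma sum_mem_finiteSums {X : Finset M} (hX : X.Nonempty) (hXS : ↑X ⊆ S) :
    ∑ x ∈ X, x ∈ finiteSums S :=
  ⟨X, hX, hXS, rfl⟩

lemma finiteSums_mono {T : Set M} (hST : S ⊆ T) : finiteSums S ⊆ finiteSums T := by
  rintro _ ⟨X, hX, hXS, rfl⟩
  exact sum_mem_finiteSums hX (hXS.trans hST)

lemma finiteSums_empty : finiteSums (∅ : Set M) = ∅ := by
  refine Set.eq_empty_of_forall_notMem ?_
  rintro _ ⟨X, ⟨x, hx⟩, hX, rfl⟩
  exact hX hx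

lemma isOfFiniteCharacter_finiteSums_subset (B : Set M) :
    IsOfFiniteCharacter {S | finiteSums S ⊆ B} := by
  refine fun S ↦ ⟨fun hS T hTS _ ↦ (finiteSums_mono hTS).trans hS, ?_⟩
  rintro h _ ⟨X, hX, hXS, rfl⟩
  exact h X hXS X.finite_toSet (sum_mem_finiteSums hX subset_rfl)

lemma finiteSums_insert_subset {x : M} (hS : finiteSums S ⊆ B)
    (hx : ∀ X : Finset M, ↑X ⊆ S → (∑ y ∈ X, y) + x ∈ B) : finiteSums (insert x S) ⊆ B := by
  classical
  rintro _ ⟨X, hX, hXS, rfl⟩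
  by_cases hxX : x ∈ X
  · rw [← Finset.sum_erase_add X _ hxX]
    refine hx _ ?_
    rwa [Finset.coe_erase, Set.sdiff_singleton_subset_iff]
  · exact hS (sum_mem_finiteSums hX ((Set.subset_insert_iff_of_notMem (by simpa)).1 hXS))

end FiniteSums

section IdempotentUltrafilter

attribute [local instance] Ultrafilter.add

/-- The set usually written `A⋆` in the algebra of the Stone–Čech compactification: the elements
of `A` by which `q`-almost every translate stays in `A`. -/
def starSet {M : Type*} [Add M] (q : Ultrafilter M) (A : Set M) : Set M :=
  {n ∈ A | ∀ᶠ m in q, n + m ∈ A}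

lemma eventually_eventually_add_mem {M : Type*} [Add M] {q : Ultrafilter M} {A : Set M}
    (hidem : q + q = q) (hA : A ∈ q) : ∀ᶠ n in q, ∀ᶠ m in q, n + m ∈ A := by
  rw [← hidem] at hA
  exact (Ultrafilter.eventually_add q q (· ∈ A)).1 hA

lemma starSet_mem {M : Type*} [Add M] {q : Ultrafilter M} {A : Set M}
    (hidem : q + q = q) (hA : A ∈ q) : starSet q A ∈ q :=
  inter_mem hA (eventually_eventually_add_mem hidem hA)

lemma eventually_add_mem_starSet {M : Type*} [AddSemigroup M] {q : Ultrafilter M} {A : Set M}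
    (hidem : q + q = q) {n : M} (hn : n ∈ starSet q A) : ∀ᶠ m in q, n + m ∈ starSet q A := by
  filter_upwards [hn.2, eventually_eventually_add_mem hidem hn.2] with m hm hm'
  exact ⟨hm, by simpa only [add_assoc] using hm'⟩

variable {M : Type*} [AddCommMonoid M] {q : Ultrafilter M} {A S : Set M}

lemma eventually_sum_add_mem_starSet (hidem : q + q = q) (hA : A ∈ q)
    (hS : finiteSums S ⊆ starSet q A) {X : Finset M} (hX : ↑X ⊆ S) :
    ∀ᶠ n in q, (∑ x ∈ X, x) + n ∈ starSet q A := by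
  obtain rfl | hne := X.eq_empty_or_nonempty
  · simp only [Finset.sum_empty, zero_add]
    exact starSet_mem hidem hA
  · exact eventually_add_mem_starSet hidem (hS (sum_mem_finiteSums hne hX))

lemma exists_notMem_finiteSums_insert_subset_starSet (hfree : (q : Filter M) ≤ cofinite)
    (hidem : q + q = q) (hA : A ∈ q) (hfin : S.Finite) (hS : finiteSums S ⊆ starSet q A) :
    ∃ x ∉ S, finiteSums (insert x S) ⊆ starSet q A := by
  have hsums : ∀ᶠ x in q, ∀ X ∈ hfin.toFinset.powerset, (∑ y ∈ X, y) + x ∈ starSet q A := by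
    refine (eventually_all_finset _).2 fun X hX ↦ eventually_sum_add_mem_starSet hidem hA hS ?_
    simpa using hX
  have hnotMem : ∀ᶠ x in q, x ∉ S := hfree hfin.compl_mem_cofinite
  obtain ⟨x, hx, hxS⟩ := (hsums.and hnotMem).exists
  exact ⟨x, hxS, finiteSums_insert_subset hS fun X hX ↦ hx X (by simpa using hX)⟩

lemma exists_infinite_finiteSums_subset_starSet (hfree : (q : Filter M) ≤ cofinite)
    (hidem : q + q = q) (hA : A ∈ q) : ∃ S : Set M, finiteSums S ⊆ starSet q A ∧ S.Infinite :=
  exists_infinite_mem_of_isOfFiniteCharacter (isOfFiniteCharacter_finiteSums_subset _)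
    ⟨∅, finiteSums_empty.trans_subset (Set.empty_subset _)⟩
    fun _ hS hfin ↦ exists_notMem_finiteSums_insert_subset_starSet hfree hidem hA hfin hS

lemma eventually_eq_of_finite_range {ι α : Type*} (q : Ultrafilter ι) {f : ι → α}
    (hf : (Set.range f).Finite) : ∃ c, ∀ᶠ n in q, f n = c := by
  obtain ⟨c, -, hc⟩ := (q.map f).eq_pure_of_finite_mem hf range_mem_map
  refine ⟨c, ?_⟩
  change {c} ∈ q.map f
  rw [hc]
  exact Set.mem_singleton c

lemma le_cofinite_iff_finite_notMem {ι : Type*} {q : Ultrafilter ι} :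
    (q : Filter ι) ≤ cofinite ↔ ∀ S : Set ι, S.Finite → S ∉ q :=
  ⟨fun h _ hS ↦ Ultrafilter.compl_mem_iff_notMem.1 (h hS.compl_mem_cofinite), fun h ↦
    le_cofinite_iff_compl_singleton_mem.2 fun x ↦
      Ultrafilter.compl_mem_iff_notMem.2 (h {x} (Set.finite_singleton x))⟩

lemma add_self_eq_self_iff {M : Type*} [AddCommMagma M] {q : Ultrafilter M} :
    q + q = q ↔ ∀ S : Set M, S ∈ q ↔ {n | {m | m + n ∈ S} ∈ q} ∈ q := by
  have mem_add (S : Set M) : S ∈ q + q ↔ {n | {m | m + n ∈ S} ∈ q} ∈ q := by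
    simp only [add_comm _ (_ : M)]
    exact Ultrafilter.eventually_add q q (· ∈ S)
  simp only [eq_comm (a := q + q), Ultrafilter.ext_iff, mem_add]

theorem stmt_17_general {M α : Type*} [AddCommMonoid M] {q : Ultrafilter M}
    (hfree : (q : Filter M) ≤ cofinite) (hidem : q + q = q)
    {f : M → α} (hf : (Set.range f).Finite) :
    ∃ (c : α) (S : Set M), S.Infinite ∧
      (∀ X : Finset M, X.Nonempty → ↑X ⊆ S → f (∑ x ∈ X, x) = c) ∧
      (∀ X : Finset M, ↑X ⊆ S → ∀ᶠ n in q, f ((∑ x ∈ X, x) + n) = c) := by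
  obtain ⟨c, hc⟩ := eventually_eq_of_finite_range q hf
  obtain ⟨S, hS, hinf⟩ := exists_infinite_finiteSums_subset_starSet hfree hidem hc
  refine ⟨c, S, hinf, fun X hne hX ↦ (hS (sum_mem_finiteSums hne hX)).1, fun X hX ↦ ?_⟩
  exact (eventually_sum_add_mem_starSet hidem hc hS hX).mono fun _ hn ↦ hn.1

end IdempotentUltrafilter

theorem stmt_17 (q : Ultrafilter ℕ)
    (hfree : ∀ S : Set ℕ, S.Finite → S ∉ q)
    (hidem : ∀ S : Set ℕ, S ∈ q ↔ {n : ℕ | {m : ℕ | m + n ∈ S} ∈ q} ∈ q)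
    (f : ℕ → ℝ) (hf : (Set.range f).Finite) :
    ∃ (c : ℝ) (S : Set ℕ), S.Infinite ∧
      (∀ X : Finset ℕ, X.Nonempty → ↑X ⊆ S → f (∑ x ∈ X, x) = c) ∧
      (∀ X : Finset ℕ, ↑X ⊆ S → {n : ℕ | f ((∑ x ∈ X, x) + n) = c} ∈ q) :=
  stmt_17_general (le_cofinite_iff_finite_notMem.2 hfree) (add_self_eq_self_iff.2 hidem) hf
end
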